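/- Let s ∈ ℝ and α_n = 2^{-n}. There exists a constant C = C(φ) > 0 such that liminf_{n→∞} ‖α_n² ∂_x² (1 − α_n² ∂_x²)^{-1} (g_n ∂_x f_n)‖_{H^s(ℝ)} ≥ C, where f_n(x) = 2^{-ns} φ(x) sin((17/12)·2^n x) and g_n(x) = 2^{-n} φ(x). -/

import Mathlib

open MeasureTheory Filter

/-- Fourier transform with convention `f̂(ξ) = ∫ f(x) e^{-i x ξ} dx`. -/
noncomputable def fourierT (f : ℝ → ℂ) (ξ : ℝ) : ℂ :=
  ∫ x : ℝ, f x * Complex.exp (-(Complex.I * x * ξ))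

/-- The `H^s(ℝ)` norm, `‖f‖_{H^s}² = ∫ (1+|ξ|²)^s |f̂(ξ)|² dξ`. -/
noncomputable def sobolevNorm (s : ℝ) (f : ℝ → ℂ) : ℝ :=
  Real.sqrt (∫ ξ : ℝ, (1 + ξ ^ 2) ^ s * ‖fourierT f ξ‖ ^ 2)

/-- Membership in `H^s(ℝ)` (for integrable representatives). -/
def MemSobolev (s : ℝ) (f : ℝ → ℂ) : Prop :=
  MeasureTheory.Integrable f ∧
    MeasureTheory.Integrable (fun ξ : ℝ => (1 + ξ ^ 2) ^ s * ‖fourierT f ξ‖ ^ 2)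

/-- The high-frequency functions `f_n(x) = 2^{-ns} φ(x) sin((17/12)·2^n x)`. -/
noncomputable def fn (s : ℝ) (φ : ℝ → ℂ) (n : ℕ) : ℝ → ℂ :=
  fun x => (((2 : ℝ) ^ (-(n : ℝ) * s) * Real.sin (17 / 12 * 2 ^ n * x) : ℝ) : ℂ) * φ x

/-- The low-frequency functions `g_n(x) = 2^{-n} φ(x)`. -/
noncomputable def gn (φ : ℝ → ℂ) (n : ℕ) : ℝ → ℂ :=
  fun x => (((2 : ℝ) ^ (-(n : ℝ)) : ℝ) : ℂ) * φ x

/-- `φ̂` is an even, real-valued, nonnegative function in `C_c^∞(ℝ)` with `φ̂ = 1` on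
`{|ξ| ≤ 1/4}` and `φ̂ = 0` on `{|ξ| ≥ 1/2}`, and `φ` is the (continuous, integrable)
function on `ℝ` whose Fourier transform is `φ̂`. -/
structure CutoffPair (φhat : ℝ → ℝ) (φ : ℝ → ℂ) : Prop where
  smooth : ContDiff ℝ (⊤ : ℕ∞) φhat
  compactSupport : HasCompactSupport φhat
  even : ∀ ξ : ℝ, φhat (-ξ) = φhat ξ
  nonneg : ∀ ξ : ℝ, 0 ≤ φhat ξ
  eq_one : ∀ ξ : ℝ, |ξ| ≤ 1 / 4 → φhat ξ = 1
  eq_zero : ∀ ξ : ℝ, 1 / 2 ≤ |ξ| → φhat ξ = 0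
  continuous : Continuous φ
  integrable : MeasureTheory.Integrable φ
  fourier_eq : ∀ ξ : ℝ, fourierT φ ξ = (φhat ξ : ℂ)

/-- The `H^s` norm of the image of `f` under the Fourier multiplier with symbol `m`,
i.e. `(∫ (1+|ξ|²)^s |m(ξ) f̂(ξ)|² dξ)^{1/2}`. -/
noncomputable def multSobolevNorm (s : ℝ) (m : ℝ → ℂ) (f : ℝ → ℂ) : ℝ :=
  Real.sqrt (∫ ξ : ℝ, (1 + ξ ^ 2) ^ s * ‖m ξ * fourierT f ξ‖ ^ 2)

open SchwartzMap FourierTransform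

lemma fourierT_eq (f : ℝ → ℂ) (ξ : ℝ) : fourierT f ξ = 𝓕 f (ξ / (2 * Real.pi)) := by
  rw [Real.fourier_real_eq_integral_exp_smul, fourierT]
  congr 1; ext x
  rw [smul_eq_mul, mul_comm]
  congr 2
  push_cast
  have : (Real.pi : ℂ) ≠ 0 := by exact_mod_cast Real.pi_ne_zero
  field_simp

lemma fourierT_mod (f : ℝ → ℂ) (ω ξ : ℝ) :
    fourierT (fun x => Complex.exp (Complex.I * ω * x) * f x) ξ = fourierT f (ξ - ω) := by
  unfold fourierT
  congr 1; ext x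
  beta_reduce
  rw [mul_comm (Complex.exp _) (f x), mul_assoc, ← Complex.exp_add]
  congr 2
  push_cast; ring

lemma exists_schwartz_phi (φhat : ℝ → ℝ) (φ : ℝ → ℂ) (hφ : CutoffPair φhat φ) :
    ∃ Φ : 𝓢(ℝ, ℂ), ⇑Φ = φ := by
  have hpi : (2 * Real.pi) ≠ 0 := by positivity
  have h1 : HasCompactSupport (fun w : ℝ => ((φhat (w * (2 * Real.pi)) : ℝ) : ℂ)) := by
    have := hφ.compactSupport.comp_homeomorph (Homeomorph.mulRight₀ (2 * Real.pi) hpi)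
    exact this.comp_left (g := fun r : ℝ => (r : ℂ)) (by simp)
  have h2 : ContDiff ℝ (⊤ : ℕ∞) (fun w : ℝ => ((φhat (w * (2 * Real.pi)) : ℝ) : ℂ)) := by
    refine Complex.ofRealCLM.contDiff.comp (hφ.smooth.comp ?_)
    fun_prop
  have h3 : 𝓕 φ = ⇑(h1.toSchwartzMap h2) := by
    ext w
    have := hφ.fourier_eq (w * (2 * Real.pi))
    rw [fourierT_eq, mul_div_assoc, div_self hpi, mul_one] at this
    rw [this]; rfl
  refine ⟨𝓕⁻ (h1.toSchwartzMap h2), ?_⟩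
  rw [fourierInv_coe, ← h3]
  apply hφ.continuous.fourierInv_fourier_eq hφ.integrable
  rw [h3]; exact SchwartzMap.integrable _

lemma lin4 (c1 c2 c3 c4 : ℂ) {u1 u2 u3 u4 : ℝ → ℂ} (h1 : Integrable u1) (h2 : Integrable u2)
    (h3 : Integrable u3) (h4 : Integrable u4) :
    ∫ x, (c1 * u1 x + c2 * u2 x + c3 * u3 x + c4 * u4 x) =
      c1 * (∫ x, u1 x) + c2 * (∫ x, u2 x) + c3 * (∫ x, u3 x) + c4 * (∫ x, u4 x) := by
  have k1 := h1.const_mul c1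
  have k2 := h2.const_mul c2
  have k3 := h3.const_mul c3
  have k4 := h4.const_mul c4
  have e1 := integral_add' ((k1.add k2).add k3) k4
  rw [integral_add' (k1.add k2) k3, integral_add' k1 k2] at e1
  simp only [integral_const_mul] at e1
  exact e1

lemma exists_schwartz (φhat : ℝ → ℝ) (φ : ℝ → ℂ) (hφ : CutoffPair φhat φ) :
    ∃ A : 𝓢(ℝ, ℂ), (∃ ξ, A ξ ≠ 0) ∧ ∀ (s : ℝ) (n : ℕ) (ω : ℝ), ω = 17 / 12 * 2 ^ n → ∀ ξ : ℝ,
      fourierT (fun x => gn φ n x * deriv (fn s φ n) x) ξ =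
        (((2 : ℝ) ^ (-(n : ℝ)) * (2 : ℝ) ^ (-(n : ℝ) * s) / 4 : ℝ) : ℂ) *
        (A (ξ - ω) * (ω + ξ) + A (ξ + ω) * (ω - ξ)) := by
  obtain ⟨Φ, rfl⟩ := exists_schwartz_phi φhat φ hφ
  have hpi : (2 * Real.pi) ≠ 0 := by positivity
  let S : 𝓢(ℝ, ℂ) := SchwartzMap.pairing (ContinuousLinearMap.mul ℂ ℂ) Φ Φ
  have hS : ∀ x, S x = Φ x * Φ x := fun x => by
    simp [S, SchwartzMap.pairing_apply_apply]
  let e : ℝ ≃L[ℝ] ℝ := ContinuousLinearEquiv.unitsEquivAut ℝ (Units.mk0 (2 * Real.pi)⁻¹ (inv_ne_zero hpi))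
  let A : 𝓢(ℝ, ℂ) := SchwartzMap.compCLMOfContinuousLinearEquiv ℂ e (𝓕 S)
  have hA : ∀ ξ, A ξ = fourierT S ξ := fun ξ => by
    rw [fourierT_eq]; 
    show (𝓕 S) (e ξ) = _
    rw [fourier_coe]; congr 1
  have hdiff : Differentiable ℝ S := S.differentiable
  have hdS : ∀ x, deriv S x = 2 * (Φ x * deriv Φ x) := fun x => by
    have h : (S : ℝ → ℂ) = fun x => Φ x * Φ x := funext hS
    have h1 := (Φ.differentiable x).hasDerivAt
    rw [h, (h1.fun_mul h1).deriv]; ring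
  have hdint : Integrable (deriv S) := (SchwartzMap.derivCLM ℂ ℂ S).integrable
  have hB : ∀ ξ : ℝ, fourierT (deriv S) ξ = Complex.I * ξ * A ξ := fun ξ => by
    rw [hA, fourierT_eq, fourierT_eq, Real.fourier_deriv S.integrable hdiff hdint]
    beta_reduce
    rw [smul_eq_mul]
    have : (Real.pi : ℂ) ≠ 0 := by exact_mod_cast Real.pi_ne_zero
    push_cast
    field_simp
  refine ⟨A, ?_, ?_⟩
  · by_contra! hcon
    have h0 : 𝓕 S = 0 := by
      ext w
      have := hcon (w * (2 * Real.pi))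
      rw [hA, fourierT_eq, mul_div_assoc, div_self hpi, mul_one] at this
      rw [fourier_coe, this]; rfl
    have h1 : S = 0 := by
      have h : 𝓕⁻ (𝓕 S) = S := FourierTransform.fourierInv_fourier_eq S
      rw [← h, h0, FourierTransform.fourierInv_zero]
    have h2 : ∀ x, Φ x = 0 := fun x => by
      have := hS x
      rw [h1] at this
      simpa using this.symm
    have h3 := hφ.fourier_eq 0
    rw [hφ.eq_one 0 (by norm_num)] at h3
    simp [fourierT, h2] at h3
  · intro s n ω hω ξ
    set c : ℝ := (2 : ℝ) ^ (-(n : ℝ) * s) with hc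
    set a : ℝ := (2 : ℝ) ^ (-(n : ℝ)) with ha
    have hfun : ∀ x : ℝ, gn Φ n x * deriv (fn s Φ n) x =
        ((a * c / 4 : ℝ) : ℂ) * ((2 * ω) * (Complex.exp (Complex.I * ω * x) * S x) +
          (2 * ω) * (Complex.exp (Complex.I * (-ω : ℝ) * x) * S x) +
          (-Complex.I) * (Complex.exp (Complex.I * ω * x) * deriv S x) +
          Complex.I * (Complex.exp (Complex.I * (-ω : ℝ) * x) * deriv S x)) := by
      intro x
      have hs : HasDerivAt (fun x : ℝ => ((c * Real.sin (ω * x) : ℝ) : ℂ))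
          ((c * (Real.cos (ω * x) * ω) : ℝ) : ℂ) x := by
        have h1 : HasDerivAt (fun x : ℝ => ω * x) ω x := by
          simpa using (hasDerivAt_id x).const_mul ω
        exact (h1.sin.const_mul c).ofReal_comp
      have hf : deriv (fn s Φ n) x = ((c * (Real.cos (ω * x) * ω) : ℝ) : ℂ) * Φ x +
          ((c * Real.sin (ω * x) : ℝ) : ℂ) * deriv Φ x := by
        have := (hs.mul (Φ.differentiable x).hasDerivAt).deriv
        rw [← this]
        congr 1
        ext y
        simp only [fn, ← hc, hω, Pi.mul_apply]
      rw [hf, hS, hdS, gn, ← ha]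
      have e1 : Complex.exp (Complex.I * ω * x) = Complex.cos (ω * x) + Complex.sin (ω * x) * Complex.I := by
        rw [← Complex.exp_mul_I]; congr 1; ring
      have e2 : Complex.exp (Complex.I * (-ω : ℝ) * x) = Complex.cos (ω * x) - Complex.sin (ω * x) * Complex.I := by
        have h := Complex.exp_mul_I (-(ω * x : ℂ))
        rw [Complex.cos_neg, Complex.sin_neg] at h
        rw [sub_eq_add_neg, ← neg_mul, ← h]; congr 1; push_cast; ring
      rw [e1, e2]
      push_cast
      have hI := Complex.I_sq
      linear_combination (a * c * Φ x * deriv Φ x * Complex.sin (ω * x)) * hI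
    have key : ∀ (w : ℝ) (f : ℝ → ℂ), Integrable f →
        Integrable (fun x : ℝ => (Complex.exp (Complex.I * w * x) * f x) * Complex.exp (-(Complex.I * x * ξ))) := by
      intro w f hf
      have : Integrable (fun x : ℝ => (Complex.exp (Complex.I * w * x) * Complex.exp (-(Complex.I * x * ξ))) * f x) := by
        refine hf.bdd_mul (c := 1) (by fun_prop) (ae_of_all _ fun x => ?_)
        rw [norm_mul, Complex.norm_exp, Complex.norm_exp]
        simp
      refine this.congr (ae_of_all _ fun x => by ring)
    have i1 := key ω S S.integrable
    have i2 := key (-ω) S S.integrable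
    have i3 := key ω _ hdint
    have i4 := key (-ω) _ hdint
    have hT : fourierT (fun x => gn Φ n x * deriv (fn s Φ n) x) ξ = 
       ((a * c / 4 : ℝ) : ℂ) * ((2 * ω) * fourierT (fun x => Complex.exp (Complex.I * ω * x) * S x) ξ +
          (2 * ω) * fourierT (fun x => Complex.exp (Complex.I * (-ω : ℝ) * x) * S x) ξ +
          (-Complex.I) * fourierT (fun x => Complex.exp (Complex.I * ω * x) * deriv S x) ξ +
          Complex.I * fourierT (fun x => Complex.exp (Complex.I * (-ω : ℝ) * x) * deriv S x) ξ) := by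
      have hlin := lin4 (2 * ω) (2 * ω) (-Complex.I) Complex.I i1 i2 i3 i4
      unfold fourierT
      rw [← hlin, ← integral_const_mul]
      congr 1; ext x
      beta_reduce
      rw [hfun]
      ring
    rw [hT, fourierT_mod, fourierT_mod, fourierT_mod, fourierT_mod, hB, hB, ← hA, ← hA]
    have hI := Complex.I_sq
    simp only [sub_neg_eq_add]
    push_cast
    linear_combination ((a * c / 4 : ℂ) * (-(ξ - ω) * A (ξ - ω) + (ξ + ω) * A (ξ + ω))) * hI


lemma rpow_sandwich (s x D : ℝ) (hD : 1 ≤ D) (hx : D⁻¹ ≤ x) (hx' : x ≤ D) :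
    (D ^ |s|)⁻¹ ≤ x ^ s ∧ x ^ s ≤ D ^ |s| := by
  have hD0 : 0 < D := by linarith
  have hx0 : 0 < x := lt_of_lt_of_le (inv_pos.mpr hD0) hx
  rcases le_total 0 s with h | h
  · rw [abs_of_nonneg h, ← Real.inv_rpow hD0.le]
    exact ⟨Real.rpow_le_rpow (inv_pos.mpr hD0).le hx h, Real.rpow_le_rpow hx0.le hx' h⟩
  · rw [abs_of_nonpos h]
    have e : x ^ s = (x⁻¹) ^ (-s) := by rw [Real.inv_rpow hx0.le, Real.rpow_neg hx0.le, inv_inv]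
    rw [e, ← Real.inv_rpow hD0.le]
    have hs : 0 ≤ -s := by linarith
    exact ⟨Real.rpow_le_rpow (inv_pos.mpr hD0).le (inv_anti₀ hx0 hx') hs,
      Real.rpow_le_rpow (inv_pos.mpr hx0).le ((inv_le_comm₀ hD0 hx0).mp hx) hs⟩

lemma peetre (s : ℝ) (n : ℕ) (ω ξ η : ℝ) (hω : ω ^ 2 = (17 / 12 * 2 ^ n) ^ 2)
    (h : ξ = ω + η) :
    ((8 * (1 + η ^ 2)) ^ |s|)⁻¹ ≤ (1 + ξ ^ 2) ^ s * ((2 : ℝ) ^ (-(n : ℝ) * s)) ^ 2 ∧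
    (1 + ξ ^ 2) ^ s * ((2 : ℝ) ^ (-(n : ℝ) * s)) ^ 2 ≤ (8 * (1 + η ^ 2)) ^ |s| := by
  have h4 : (1 : ℝ) ≤ 4 ^ n := one_le_pow₀ (by norm_num)
  have hω' : ω ^ 2 = 289 / 144 * 4 ^ n := by
    rw [hω, mul_pow, ← pow_mul, mul_comm n 2, pow_mul]; norm_num
  have e : (1 + ξ ^ 2) ^ s * ((2 : ℝ) ^ (-(n : ℝ) * s)) ^ 2 = ((1 + ξ ^ 2) * (4 ^ n)⁻¹) ^ s := by
    rw [Real.mul_rpow (by positivity) (by positivity), Real.rpow_mul (by norm_num),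
      Real.rpow_neg (by norm_num), Real.rpow_natCast, ← Real.rpow_natCast ((((2 : ℝ) ^ n)⁻¹) ^ s) 2,
      ← Real.rpow_mul (by positivity), mul_comm s, Real.rpow_mul (by positivity)]
    congr 2
    rw [Real.rpow_natCast, inv_pow, ← pow_mul, mul_comm n 2, pow_mul]; norm_num
  rw [e]
  refine rpow_sandwich s _ _ (by nlinarith [sq_nonneg η]) ?_ ?_
  · rw [inv_le_comm₀ (by positivity) (by positivity), mul_inv, inv_inv, inv_mul_le_iff₀ (by positivity)]
    have : ω ^ 2 ≤ 2 * (ξ ^ 2 + η ^ 2) := by rw [h]; nlinarith [sq_nonneg (ω + 2 * η)]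
    nlinarith [mul_nonneg (sq_nonneg ξ) (sq_nonneg η)]
  · rw [mul_inv_le_iff₀ (by positivity)]
    have : ξ ^ 2 ≤ 2 * (ω ^ 2 + η ^ 2) := by rw [h]; nlinarith [sq_nonneg (ω - η)]
    nlinarith [mul_nonneg (sub_nonneg.2 h4) (sq_nonneg η)]

/-- The integrand after rescaling. -/
noncomputable def integrandN (s : ℝ) (A : 𝓢(ℝ, ℂ)) (n : ℕ) (ξ : ℝ) : ℝ :=
  ((1 + ξ ^ 2) ^ s * ((2 : ℝ) ^ (-(n : ℝ) * s)) ^ 2) *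
    ((((2 : ℝ) ^ n)⁻¹ ^ 2 * ξ ^ 2) / (1 + ((2 : ℝ) ^ n)⁻¹ ^ 2 * ξ ^ 2)) ^ 2 *
    (((2 : ℝ) ^ n)⁻¹ / 4 * ‖A (ξ - 17 / 12 * 2 ^ n) * (((17 / 12 * 2 ^ n : ℝ) : ℂ) + ξ) +
      A (ξ + 17 / 12 * 2 ^ n) * (((17 / 12 * 2 ^ n : ℝ) : ℂ) - ξ)‖) ^ 2

lemma upper_aux (s : ℝ) (k : ℕ) (hk : |s| ≤ k) (n : ℕ) (ω ξ η a : ℝ)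
    (hω : ω ^ 2 = (17 / 12 * 2 ^ n) ^ 2) (h : ξ = ω + η) (ha : 0 ≤ a) :
    (1 + ξ ^ 2) ^ s * ((2 : ℝ) ^ (-(n : ℝ) * s)) ^ 2 * (a * (1 + η ^ 2)) ^ 2 ≤
      8 ^ k * ((1 + η ^ 2) ^ (k + 1) * a) ^ 2 := by
  have h1 := (peetre s n ω ξ η hω h).2
  have h2 : (8 * (1 + η ^ 2)) ^ |s| ≤ (8 * (1 + η ^ 2)) ^ k := by
    rw [← Real.rpow_natCast (8 * (1 + η ^ 2)) k]
    exact Real.rpow_le_rpow_of_exponent_le (by nlinarith [sq_nonneg η]) hk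
  calc _ ≤ (8 * (1 + η ^ 2)) ^ k * (a * (1 + η ^ 2)) ^ 2 := by gcongr; exact h1.trans h2
    _ = 8 ^ k * ((1 + η ^ 2) ^ k * 1 * ((1 + η ^ 2) * a) ^ 2) := by rw [mul_pow]; ring
    _ ≤ 8 ^ k * ((1 + η ^ 2) ^ k * (1 + η ^ 2) ^ k * ((1 + η ^ 2) * a) ^ 2) := by
        have : 1 ≤ (1 + η ^ 2) ^ k := one_le_pow₀ (by nlinarith [sq_nonneg η])
        gcongr
    _ = _ := by ring

lemma upper_bound (s : ℝ) (A : 𝓢(ℝ, ℂ)) : ∃ G : 𝓢(ℝ, ℂ), ∃ K : ℝ, 0 ≤ K ∧ ∀ n ξ,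
    integrandN s A n ξ ≤ K * (‖G (ξ - 17 / 12 * 2 ^ n)‖ ^ 2 + ‖G (ξ + 17 / 12 * 2 ^ n)‖ ^ 2) := by
  obtain ⟨k, hk⟩ := exists_nat_ge |s|
  let g : ℝ → ℂ := fun η => (((1 + η ^ 2) ^ (k + 1) : ℝ) : ℂ)
  have hg : g.HasTemperateGrowth := by
    have : (fun η : ℝ => (1 + η ^ 2) ^ (k + 1)).HasTemperateGrowth := by fun_prop
    exact (Complex.ofRealCLM.hasTemperateGrowth).comp this
  have hG : ∀ η, ‖SchwartzMap.smulLeftCLM ℂ g A η‖ = (1 + η ^ 2) ^ (k + 1) * ‖A η‖ := fun η => by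
    rw [SchwartzMap.smulLeftCLM_apply_apply hg, norm_smul, Complex.norm_real,
      Real.norm_of_nonneg (by positivity)]
  refine ⟨SchwartzMap.smulLeftCLM ℂ g A, 8 * 8 ^ k, by positivity, fun n ξ => ?_⟩
  rw [hG, hG, integrandN]
  set ω : ℝ := 17 / 12 * 2 ^ n with hω
  have hω1 : 1 ≤ ω := by
    have : (1 : ℝ) ≤ 2 ^ n := one_le_pow₀ (by norm_num)
    linarith
  set a := ‖A (ξ - ω)‖
  set b := ‖A (ξ + ω)‖
  have ha : 0 ≤ a := norm_nonneg _
  have hb : 0 ≤ b := norm_nonneg _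
  have hN : ((2 : ℝ) ^ n)⁻¹ / 4 * ‖A (ξ - ω) * ((ω : ℂ) + ξ) + A (ξ + ω) * ((ω : ℂ) - ξ)‖ ≤
      2 * (a * (1 + (ξ - ω) ^ 2) + b * (1 + (ξ + ω) ^ 2)) := by
    have c1 : ∀ η : ℝ, |2 * ω + η| ≤ 3 * ω * (1 + η ^ 2) := fun η => by
      have p : 0 ≤ (ω - 1) * η ^ 2 := mul_nonneg (by linarith) (sq_nonneg _)
      rw [abs_le]; constructor <;> nlinarith [sq_nonneg (η - 1), sq_nonneg (η + 1)]
    have c2 : ‖(ω : ℂ) + ξ‖ ≤ 3 * ω * (1 + (ξ - ω) ^ 2) := by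
      rw [← Complex.ofReal_add, Complex.norm_real, Real.norm_eq_abs]
      convert c1 (ξ - ω) using 2; ring
    have c3 : ‖(ω : ℂ) - ξ‖ ≤ 3 * ω * (1 + (ξ + ω) ^ 2) := by
      rw [← Complex.ofReal_sub, Complex.norm_real, Real.norm_eq_abs]
      have := c1 (-(ξ + ω)); rw [neg_sq] at this
      convert this using 2; ring
    have c4 : ‖A (ξ - ω) * ((ω : ℂ) + ξ) + A (ξ + ω) * ((ω : ℂ) - ξ)‖ ≤
        a * (3 * ω * (1 + (ξ - ω) ^ 2)) + b * (3 * ω * (1 + (ξ + ω) ^ 2)) := by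
      refine (norm_add_le _ _).trans ?_
      rw [norm_mul, norm_mul]
      gcongr
    calc _ ≤ ((2 : ℝ) ^ n)⁻¹ / 4 * (a * (3 * ω * (1 + (ξ - ω) ^ 2)) + b * (3 * ω * (1 + (ξ + ω) ^ 2))) := by gcongr
      _ = 17 / 16 * (a * (1 + (ξ - ω) ^ 2) + b * (1 + (ξ + ω) ^ 2)) := by rw [hω]; field_simp; ring
      _ ≤ _ := by gcongr; norm_num
  have hm : (((2 : ℝ) ^ n)⁻¹ ^ 2 * ξ ^ 2 / (1 + ((2 : ℝ) ^ n)⁻¹ ^ 2 * ξ ^ 2)) ^ 2 ≤ 1 := by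
    apply pow_le_one₀ (by positivity)
    rw [div_le_one (by positivity)]; linarith
  have u1 := upper_aux s k hk n ω ξ (ξ - ω) a rfl (by ring) ha
  have u2 := upper_aux s k hk n (-ω) ξ (ξ + ω) b (by rw [neg_sq]) (by ring) hb
  have hw : 0 ≤ (1 + ξ ^ 2) ^ s * ((2 : ℝ) ^ (-(n : ℝ) * s)) ^ 2 := by positivity
  set w := (1 + ξ ^ 2) ^ s * ((2 : ℝ) ^ (-(n : ℝ) * s)) ^ 2
  calc _ ≤ w * 1 * (2 * (a * (1 + (ξ - ω) ^ 2) + b * (1 + (ξ + ω) ^ 2))) ^ 2 := by gcongr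
    _ ≤ w * (8 * ((a * (1 + (ξ - ω) ^ 2)) ^ 2 + (b * (1 + (ξ + ω) ^ 2)) ^ 2)) := by
      rw [mul_one]; gcongr
      nlinarith [sq_nonneg (a * (1 + (ξ - ω) ^ 2) - b * (1 + (ξ + ω) ^ 2))]
    _ ≤ _ := by linarith

lemma integrand_integrable (s : ℝ) (A : 𝓢(ℝ, ℂ)) : (∀ n, Integrable (integrandN s A n)) ∧
    ∃ M, ∀ n, ∫ ξ, integrandN s A n ξ ≤ M := by
  obtain ⟨G, K, hK, hG⟩ := upper_bound s A
  have hi : Integrable (fun η => ‖G η‖ ^ 2) := (G.memLp 2).integrable_norm_pow (by norm_num)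
  have hd : ∀ n : ℕ, Integrable (fun ξ => K * (‖G (ξ - 17 / 12 * 2 ^ n)‖ ^ 2 + ‖G (ξ + 17 / 12 * 2 ^ n)‖ ^ 2)) :=
    fun n => ((hi.comp_sub_right _).add (hi.comp_add_right _)).const_mul K
  have hI : ∀ n, Integrable (integrandN s A n) := fun n => by
    refine (hd n).mono' ?_ (ae_of_all _ fun ξ => ?_)
    · apply Continuous.aestronglyMeasurable
      have hA := A.continuous
      unfold integrandN
      refine (Continuous.mul (Continuous.mul (Continuous.mul ?_ (by fun_prop)) ?_) (by fun_prop))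
      · exact Continuous.rpow_const (by fun_prop) fun x => Or.inl (by positivity)
      · refine Continuous.pow (Continuous.div (by fun_prop) (by fun_prop) fun x => by positivity) 2
    · rw [Real.norm_of_nonneg (by unfold integrandN; positivity)]
      exact hG n ξ
  refine ⟨hI, K * ((∫ η, ‖G η‖ ^ 2) + ∫ η, ‖G η‖ ^ 2), fun n => ?_⟩
  refine (integral_mono (hI n) (hd n) (hG n)).trans ?_
  rw [integral_const_mul, integral_add (hi.comp_sub_right _) (hi.comp_add_right _),
    integral_sub_right_eq_self (fun η => ‖G η‖ ^ 2), integral_add_right_eq_self (fun η => ‖G η‖ ^ 2)]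

lemma lower_bound (s : ℝ) (A : 𝓢(ℝ, ℂ)) (ξ₀ : ℝ) (hA : A ξ₀ ≠ 0) :
    ∃ c δ : ℝ, 0 < c ∧ 0 < δ ∧ ∀ᶠ n : ℕ in atTop,
      ∀ η, |η - ξ₀| ≤ δ → c ≤ integrandN s A n (η + 17 / 12 * 2 ^ n) := by
  obtain ⟨M, hM⟩ : ∃ M, ∀ x, ‖A x‖ ≤ M := by
    obtain ⟨M, hM⟩ := A.decay 0 0
    exact ⟨M, fun x => by simpa using hM.2 x⟩
  set c₀ := ‖A ξ₀‖ / 2 with hc₀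
  have hc0 : 0 < c₀ := by have := norm_pos_iff.mpr hA; positivity
  obtain ⟨δ, hδ, hball⟩ : ∃ δ > 0, ∀ η, |η - ξ₀| ≤ δ → c₀ ≤ ‖A η‖ := by
    have : ∀ᶠ η in nhds ξ₀, c₀ < ‖A η‖ :=
      (A.continuous.norm.tendsto ξ₀).eventually_const_lt (by have := norm_pos_iff.mpr hA; linarith)
    obtain ⟨ε, hε, h⟩ := Metric.eventually_nhds_iff.mp this
    exact ⟨ε / 2, by positivity, fun η hη => (h (by rw [Real.dist_eq]; linarith)).le⟩
  set R := |ξ₀| + δ with hR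
  have hR0 : 0 ≤ R := by positivity
  have hM0 : 0 ≤ M := (norm_nonneg _).trans (hM 0)
  refine ⟨((8 * (1 + R ^ 2)) ^ |s|)⁻¹ * (1 / 4) ^ 2 * (c₀ / 4) ^ 2, δ, by positivity, hδ, ?_⟩
  have ht : Tendsto (fun n : ℕ => (2 : ℝ) ^ n) atTop atTop := tendsto_pow_atTop_atTop_of_one_lt (by norm_num)
  filter_upwards [ht.eventually_ge_atTop (2 * R), ht.eventually_ge_atTop (R + M * R / c₀)] with n h1 h2 η hη
  have hηR : |η| ≤ R := by
    have := abs_sub_abs_le_abs_sub η ξ₀; linarith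
  have hηR' := abs_le.mp hηR
  have hP : (1 : ℝ) ≤ 2 ^ n := one_le_pow₀ (by norm_num)
  rw [integrandN]
  set P : ℝ := 2 ^ n with hPdef
  set ω : ℝ := 17 / 12 * P with hω
  have w1 := (peetre s n ω (η + ω) η rfl (by ring)).1
  have hη2 : η ^ 2 ≤ R ^ 2 := sq_le_sq' hηR'.1 hηR'.2
  have w2 : ((8 * (1 + R ^ 2)) ^ |s|)⁻¹ ≤ ((8 * (1 + η ^ 2)) ^ |s|)⁻¹ := by gcongr
  have m1 : 1 / 4 ≤ P⁻¹ ^ 2 * (η + ω) ^ 2 / (1 + P⁻¹ ^ 2 * (η + ω) ^ 2) := by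
    have : 9 / 10 ≤ P⁻¹ * (η + ω) := by
      rw [le_inv_mul_iff₀ (by linarith)]; linarith
    rw [le_div_iff₀ (by positivity)]
    rw [← mul_pow]
    nlinarith
  have n1 : c₀ / 4 ≤ P⁻¹ / 4 * ‖A (η + ω - ω) * ((ω : ℂ) + ((η + ω : ℝ) : ℂ)) +
      A (η + ω + ω) * ((ω : ℂ) - ((η + ω : ℝ) : ℂ))‖ := by
    have t1 : c₀ * (2 * P - R) ≤ ‖A (η + ω - ω) * ((ω : ℂ) + ((η + ω : ℝ) : ℂ))‖ := by
      rw [norm_mul, add_sub_cancel_right, ← Complex.ofReal_add, Complex.norm_real, Real.norm_eq_abs]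
      have : 2 * P - R ≤ |ω + (η + ω)| := le_trans (by linarith) (le_abs_self _)
      have := hball η hη
      have : 0 ≤ 2 * P - R := by linarith
      gcongr
    have t2 : ‖A (η + ω + ω) * ((ω : ℂ) - ((η + ω : ℝ) : ℂ))‖ ≤ M * R := by
      rw [norm_mul, ← Complex.ofReal_sub, Complex.norm_real, Real.norm_eq_abs]
      have : |ω - (η + ω)| ≤ R := by rw [show ω - (η + ω) = -η by ring, abs_neg]; exact hηR
      have := hM (η + ω + ω)
      gcongr
    have t3 : c₀ * P ≤ ‖A (η + ω - ω) * ((ω : ℂ) + ((η + ω : ℝ) : ℂ)) +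
      A (η + ω + ω) * ((ω : ℂ) - ((η + ω : ℝ) : ℂ))‖ := by
      have := norm_sub_le_norm_add (A (η + ω - ω) * ((ω : ℂ) + ((η + ω : ℝ) : ℂ))) (A (η + ω + ω) * ((ω : ℂ) - ((η + ω : ℝ) : ℂ)))
      have h3 : c₀ * (R + M * R / c₀) ≤ c₀ * P := by gcongr
      have h4 : c₀ * (R + M * R / c₀) = c₀ * R + M * R := by field_simp
      linarith
    calc c₀ / 4 = P⁻¹ / 4 * (c₀ * P) := by field_simp
      _ ≤ _ := by gcongr
  have w3 := w2.trans w1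
  gcongr

/-- With `α_n = 2^{-n}`, there is `C = C(φ) > 0` such that
`liminf_{n→∞} ‖α_n²∂_x²(1 − α_n²∂_x²)^{-1}(g_n ∂_x f_n)‖_{H^s} ≥ C`, where the operator is
the Fourier multiplier with symbol `−α_n²ξ²/(1 + α_n²ξ²)`. -/
theorem liminf_mult_gn_deriv_fn (s : ℝ) (φhat : ℝ → ℝ) (φ : ℝ → ℂ)
    (hφ : CutoffPair φhat φ) :
    ∃ C : ℝ, 0 < C ∧
      C ≤ Filter.liminf
        (fun n : ℕ =>
          multSobolevNorm s
            (fun ξ : ℝ => ((-(((2 : ℝ) ^ (-(n : ℝ))) ^ 2 * ξ ^ 2) /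
              (1 + ((2 : ℝ) ^ (-(n : ℝ))) ^ 2 * ξ ^ 2) : ℝ) : ℂ))
            (fun x => gn φ n x * deriv (fn s φ n) x))
        Filter.atTop := by
  obtain ⟨A, ⟨ξ₀, hA⟩, hF⟩ := exists_schwartz φhat φ hφ
  have hint : ∀ n : ℕ, multSobolevNorm s
            (fun ξ : ℝ => ((-(((2 : ℝ) ^ (-(n : ℝ))) ^ 2 * ξ ^ 2) /
              (1 + ((2 : ℝ) ^ (-(n : ℝ))) ^ 2 * ξ ^ 2) : ℝ) : ℂ))
            (fun x => gn φ n x * deriv (fn s φ n) x) = Real.sqrt (∫ ξ, integrandN s A n ξ) := by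
    intro n
    unfold multSobolevNorm
    congr 2
    ext ξ
    rw [hF s n _ rfl ξ, integrandN, norm_mul, norm_mul, Complex.norm_real, Complex.norm_real,
      Real.norm_eq_abs, Real.norm_eq_abs, neg_div, abs_neg,
      abs_of_nonneg (by positivity), abs_of_nonneg (by positivity),
      Real.rpow_neg (by norm_num) (n : ℝ), Real.rpow_natCast]
    ring
  simp_rw [hint]
  obtain ⟨hI, M, hM⟩ := integrand_integrable s A
  obtain ⟨c, δ, hc, hδ, hlow⟩ := lower_bound s A ξ₀ hA
  refine ⟨Real.sqrt (2 * δ * c), by positivity, ?_⟩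
  refine le_liminf_of_le ?_ ?_
  · refine IsBoundedUnder.isCoboundedUnder_ge ⟨Real.sqrt M, ?_⟩
    simp only [eventually_map]
    exact Eventually.of_forall fun n => Real.sqrt_le_sqrt (hM n)
  · filter_upwards [hlow] with n hn
    apply Real.sqrt_le_sqrt
    rw [← integral_add_right_eq_self _ (17 / 12 * 2 ^ n : ℝ)]
    have hi := (hI n).comp_add_right (17 / 12 * 2 ^ n : ℝ)
    have h0 : ∀ ξ, 0 ≤ integrandN s A n ξ := fun ξ => by unfold integrandN; positivity
    calc 2 * δ * c = ∫ _ in Set.Icc (ξ₀ - δ) (ξ₀ + δ), c := by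
          rw [setIntegral_const, Real.volume_real_Icc_of_le (by linarith), smul_eq_mul]; ring
      _ ≤ ∫ η in Set.Icc (ξ₀ - δ) (ξ₀ + δ), integrandN s A n (η + 17 / 12 * 2 ^ n) := by
          refine setIntegral_mono_on (by simp) hi.integrableOn measurableSet_Icc fun η hη => hn η ?_
          rw [abs_le]; constructor <;> linarith [hη.1, hη.2]
      _ ≤ _ := setIntegral_le_integral hi (ae_of_all _ fun η => h0 _)
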